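/- Let s1, s3 > 0 and s2 ∈ (0,1). The Lie bracket of the vector fields ξ4 and ξ3 on ℝ^5 equals the vector field ξ1; that is, at every point p ∈ ℝ^5, Dξ3(p)(ξ4(p)) − Dξ4(p)(ξ3(p)) = ξ1(p), where ξ1 = cos θ·∂x + sin θ·∂y + ((s1²−s2²)/s1³)sin φ·∂φ + (((1−s2)²−s3²)/s3³)sin ψ·∂ψ. -/

import Mathlib

/-!
Every component of `ξ₄` and `ξ₃` depends on a single coordinate, so every component of the bracket
is `V k * w' - W j * v'` for two one-variable functions `v`, `w` with arguments `j`, `k`. The `φ`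
and `ψ` components of the two fields have the common shape `-(1 - c cos t)` and `b (cos t - c)`,
with `(b, c) = (1 / s₁, s₂ / s₁)` and `(b, c) = (-1 / s₃, (1 - s₂) / s₃)` respectively; the mixed
terms `b c sin t cos t` cancel and leave `b (1 - c²) sin t`.
-/

open Real

/-- `Υ¹ = sin(φ+θ)dx − cos(φ+θ)dy − (s₂cos φ − s₁)dθ + s₁dφ` at `p = (x,y,θ,φ,ψ)`. -/
noncomputable def snakeUps1 (s1 s2 : ℝ) (p : Fin 5 → ℝ) : (Fin 5 → ℝ) →ₗ[ℝ] ℝ :=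
  Real.sin (p 3 + p 2) • LinearMap.proj 0 - Real.cos (p 3 + p 2) • LinearMap.proj 1
    - (s2 * Real.cos (p 3) - s1) • LinearMap.proj 2 + s1 • LinearMap.proj 3

/-- `Υ² = sin θ dx − cos θ dy`. -/
noncomputable def snakeUps2 (p : Fin 5 → ℝ) : (Fin 5 → ℝ) →ₗ[ℝ] ℝ :=
  Real.sin (p 2) • LinearMap.proj 0 - Real.cos (p 2) • LinearMap.proj 1

/-- `Υ³ = sin(ψ+θ)dx − cos(ψ+θ)dy − ((1−s₂)cos ψ − s₃)dθ − s₃dψ`. -/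
noncomputable def snakeUps3 (s2 s3 : ℝ) (p : Fin 5 → ℝ) : (Fin 5 → ℝ) →ₗ[ℝ] ℝ :=
  Real.sin (p 4 + p 2) • LinearMap.proj 0 - Real.cos (p 4 + p 2) • LinearMap.proj 1
    - ((1 - s2) * Real.cos (p 4) - s3) • LinearMap.proj 2 - s3 • LinearMap.proj 4

/-- `ξ₁ = cos θ ∂x + sin θ ∂y + ((s₁²−s₂²)/s₁³) sin φ ∂φ + (((1−s₂)²−s₃²)/s₃³) sin ψ ∂ψ`. -/
noncomputable def snakeXi1 (s1 s2 s3 : ℝ) (p : Fin 5 → ℝ) : Fin 5 → ℝ :=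
  ![Real.cos (p 2), Real.sin (p 2), 0,
    (s1 ^ 2 - s2 ^ 2) / s1 ^ 3 * Real.sin (p 3),
    ((1 - s2) ^ 2 - s3 ^ 2) / s3 ^ 3 * Real.sin (p 4)]

/-- `ξ₂ = −(1/s₁²)(1 − (s₂/s₁)cos φ)∂φ − (1/s₃²)(1 − ((1−s₂)/s₃)cos ψ)∂ψ`. -/
noncomputable def snakeXi2 (s1 s2 s3 : ℝ) (p : Fin 5 → ℝ) : Fin 5 → ℝ :=
  ![0, 0, 0, -(1 / s1 ^ 2 * (1 - s2 / s1 * Real.cos (p 3))),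
    -(1 / s3 ^ 2 * (1 - (1 - s2) / s3 * Real.cos (p 4)))]

/-- `ξ₃ = sin θ ∂x − cos θ ∂y − (1/s₁)((s₂/s₁) − cos φ)∂φ + (1/s₃)(((1−s₂)/s₃) − cos ψ)∂ψ`. -/
noncomputable def snakeXi3 (s1 s2 s3 : ℝ) (p : Fin 5 → ℝ) : Fin 5 → ℝ :=
  ![Real.sin (p 2), -Real.cos (p 2), 0,
    -(1 / s1 * (s2 / s1 - Real.cos (p 3))),
    1 / s3 * ((1 - s2) / s3 - Real.cos (p 4))]

/-- `ξ₄ = ∂θ − (1 − (s₂/s₁)cos φ)∂φ − (1 − ((1−s₂)/s₃)cos ψ)∂ψ`. -/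
noncomputable def snakeXi4 (s1 s2 s3 : ℝ) (p : Fin 5 → ℝ) : Fin 5 → ℝ :=
  ![0, 0, 1, -(1 - s2 / s1 * Real.cos (p 3)), -(1 - (1 - s2) / s3 * Real.cos (p 4))]

/-- `ξ₅ = cos θ ∂x + sin θ ∂y + (1/s₁)sin φ ∂φ − (1/s₃)sin ψ ∂ψ`. -/
noncomputable def snakeXi5 (s1 s3 : ℝ) (p : Fin 5 → ℝ) : Fin 5 → ℝ :=
  ![Real.cos (p 2), Real.sin (p 2), 0, 1 / s1 * Real.sin (p 3), -(1 / s3 * Real.sin (p 4))]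

open VectorField

section CoordinateFunctions

variable {𝕜 ι : Type*} [NontriviallyNormedField 𝕜]

section Scalar

variable [Finite ι] {E : Type*} [NormedAddCommGroup E] [NormedSpace 𝕜 E]
  {g : 𝕜 → E} {j : ι} {p : ι → 𝕜}

lemma differentiableAt_of_comp_eval (h : DifferentiableAt 𝕜 (fun q : ι → 𝕜 => g (q j)) p) :
    DifferentiableAt 𝕜 g (p j) := by
  classical
  have := Fintype.ofFinite ι
  have hline : DifferentiableAt 𝕜 (Function.update p j) (p j) :=
    (hasDerivAt_update p j (p j)).differentiableAt
  rw [← Function.update_eq_self j p] at h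
  simpa [Function.comp_def] using h.comp (p j) hline

lemma fderiv_comp_eval_apply (hg : DifferentiableAt 𝕜 g (p j)) (u : ι → 𝕜) :
    fderiv 𝕜 (fun q : ι → 𝕜 => g (q j)) p u = u j • deriv g (p j) := by
  have := Fintype.ofFinite ι
  have hcomp : HasFDerivAt (fun q : ι → 𝕜 => g (q j)) _ p :=
    hg.hasDerivAt.hasFDerivAt.comp p (hasFDerivAt_apply (F' := fun _ => 𝕜) j p)
  simp [hcomp.fderiv]

end Scalar

lemma fderiv_apply_of_comp_eval {κ : Type*} [Finite ι] [Finite κ] {E : κ → Type*}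
    [∀ i, NormedAddCommGroup (E i)] [∀ i, NormedSpace 𝕜 (E i)] {F : (ι → 𝕜) → ∀ i, E i}
    {p : ι → 𝕜} (hF : DifferentiableAt 𝕜 F p) {i : κ} {j : ι} {g : 𝕜 → E i}
    (hg : ∀ q, F q i = g (q j)) (u : ι → 𝕜) :
    fderiv 𝕜 F p u i = u j • deriv g (p j) := by
  have := Fintype.ofFinite ι
  have := Fintype.ofFinite κ
  have hcomp : DifferentiableAt 𝕜 (fun q => g (q j)) p := by
    simpa only [hg] using differentiableAt_pi.1 hF i
  calc
    fderiv 𝕜 F p u i = fderiv 𝕜 (fun q => F q i) p u := by simp [fderiv_apply hF]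
    _ = fderiv 𝕜 (fun q => g (q j)) p u := by simp only [hg]
    _ = u j • deriv g (p j) := fderiv_comp_eval_apply (differentiableAt_of_comp_eval hcomp) u

lemma lieBracket_apply_of_comp_eval [Fintype ι] {V W : (ι → 𝕜) → ι → 𝕜} {p : ι → 𝕜}
    (hV : DifferentiableAt 𝕜 V p) (hW : DifferentiableAt 𝕜 W p) {i j k : ι} {v w : 𝕜 → 𝕜}
    (hv : ∀ q, V q i = v (q j)) (hw : ∀ q, W q i = w (q k)) :
    lieBracket 𝕜 V W p i = V p k * deriv w (p k) - W p j * deriv v (p j) := by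
  simp only [lieBracket, Pi.sub_apply, fderiv_apply_of_comp_eval hV hv,
    fderiv_apply_of_comp_eval hW hw, smul_eq_mul]

end CoordinateFunctions

lemma lieBracket_apply_of_eq_cos {ι : Type*} [Fintype ι] {V W : (ι → ℝ) → ι → ℝ} {p : ι → ℝ}
    (hV : DifferentiableAt ℝ V p) (hW : DifferentiableAt ℝ W p) {i : ι} {b c : ℝ}
    (hv : ∀ q, V q i = -(1 - c * cos (q i))) (hw : ∀ q, W q i = b * (cos (q i) - c)) :
    lieBracket ℝ V W p i = b * (1 - c ^ 2) * sin (p i) := by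
  have hv' : deriv (fun t => -(1 - c * cos t)) (p i) = -(c * sin (p i)) := by simp
  have hw' : deriv (fun t => b * (cos t - c)) (p i) = -(b * sin (p i)) := by simp
  rw [lieBracket_apply_of_comp_eval hV hW (v := fun t => -(1 - c * cos t))
    (w := fun t => b * (cos t - c)) hv hw, hv', hw', hv, hw]
  ring

lemma differentiable_snakeXi3 (s1 s2 s3 : ℝ) : Differentiable ℝ (snakeXi3 s1 s2 s3) := by
  refine differentiable_pi.2 fun i => ?_
  fin_cases i <;> dsimp [snakeXi3] <;> fun_prop

lemma differentiable_snakeXi4 (s1 s2 s3 : ℝ) : Differentiable ℝ (snakeXi4 s1 s2 s3) := by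
  refine differentiable_pi.2 fun i => ?_
  fin_cases i <;> dsimp [snakeXi4] <;> fun_prop

theorem snake_bracket_xi4_xi3_general {s1 s3 : ℝ} (hs1 : s1 ≠ 0) (hs3 : s3 ≠ 0) (s2 : ℝ) :
    lieBracket ℝ (snakeXi4 s1 s2 s3) (snakeXi3 s1 s2 s3) = snakeXi1 s1 s2 s3 := by
  funext p
  let ξ₃ := snakeXi3 s1 s2 s3
  let ξ₄ := snakeXi4 s1 s2 s3
  have h₃ : DifferentiableAt ℝ ξ₃ p := differentiable_snakeXi3 s1 s2 s3 p
  have h₄ : DifferentiableAt ℝ ξ₄ p := differentiable_snakeXi4 s1 s2 s3 p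
  have hx : lieBracket ℝ ξ₄ ξ₃ p 0 = cos (p 2) := by
    simpa [ξ₄, snakeXi4] using lieBracket_apply_of_comp_eval h₄ h₃ (i := 0) (j := 2) (k := 2)
      (v := fun _ => 0) (w := sin) (fun _ => rfl) (fun _ => rfl)
  have hy : lieBracket ℝ ξ₄ ξ₃ p 1 = sin (p 2) := by
    simpa [ξ₄, snakeXi4] using lieBracket_apply_of_comp_eval h₄ h₃ (i := 1) (j := 2) (k := 2)
      (v := fun _ => 0) (w := fun t => -cos t) (fun _ => rfl) (fun _ => rfl)
  have hθ : lieBracket ℝ ξ₄ ξ₃ p 2 = 0 := by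
    simpa using lieBracket_apply_of_comp_eval h₄ h₃ (i := 2) (j := 2) (k := 2)
      (v := fun _ => 1) (w := fun _ => 0) (fun _ => rfl) (fun _ => rfl)
  have hφ : lieBracket ℝ ξ₄ ξ₃ p 3 = (s1 ^ 2 - s2 ^ 2) / s1 ^ 3 * sin (p 3) := by
    rw [lieBracket_apply_of_eq_cos h₄ h₃ (b := 1 / s1) (c := s2 / s1) (fun _ => rfl)
      (fun _ => by dsimp [ξ₃, snakeXi3]; ring)]
    field_simp
  have hψ : lieBracket ℝ ξ₄ ξ₃ p 4 = ((1 - s2) ^ 2 - s3 ^ 2) / s3 ^ 3 * sin (p 4) := by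
    rw [lieBracket_apply_of_eq_cos h₄ h₃ (b := -1 / s3) (c := (1 - s2) / s3) (fun _ => rfl)
      (fun _ => by dsimp [ξ₃, snakeXi3]; ring)]
    field_simp
    ring
  ext i
  fin_cases i
  exacts [hx, hy, hθ, hφ, hψ]

/-- The Lie bracket `[ξ₄, ξ₃] = Dξ₃(ξ₄) − Dξ₄(ξ₃)` equals `ξ₁`. -/
theorem snake_bracket_xi4_xi3 (s1 s2 s3 : ℝ) (hs1 : 0 < s1) (hs3 : 0 < s3)
    (hs2 : s2 ∈ Set.Ioo (0 : ℝ) 1) (p : Fin 5 → ℝ) :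
    fderiv ℝ (snakeXi3 s1 s2 s3) p (snakeXi4 s1 s2 s3 p)
      - fderiv ℝ (snakeXi4 s1 s2 s3) p (snakeXi3 s1 s2 s3 p) = snakeXi1 s1 s2 s3 p :=
  congrFun (snake_bracket_xi4_xi3_general hs1.ne' hs3.ne' s2) p
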